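/- arXiv:1810.11648 — 2 statements merged into one kernel-verified Lean document; each statement's English description precedes it below -/
import Mathlib

section
/- Let P be a no-signaling (2,2,2) box. Then for every quadruple (a,b,x,y) with a ⊕ b = x·y one has B_H ≤ P(a,b|x,y) ≤ 1 − B_H, and for every quadruple (a,b,x,y) with a ⊕ b ≠ x·y one has P(a,b|x,y) ≤ 1 − 2·B_H. -/
/-!
Write `L` for the total probability that `a ⊕ b ≠ x·y`, summed over the four inputs. Every entry
satisfies `2 P(a,b|x,y) = P_A(a|x) + P_B(b|y) - Pr(parity ≠ a ⊕ b | x,y)`. Inserting this in a Hardy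
expression based at an entry with `a ⊕ b = x·y`, no-signaling cancels all the marginals, leaving
`(1 - L) / 2` whatever the base entry. So `B_H` is at most each such entry, hence also at most
one minus the entry with both outputs flipped; and an entry with `a ⊕ b ≠ x·y` is a summand of
`L = 1 - 2 B_H`.
-/

lemma sum_fin_two_eq_add_add_one {M : Type*} [AddCommMonoid M] (f : Fin 2 → M) (i : Fin 2) :
    ∑ j, f j = f i + f (i + 1) := by
  fin_cases i
  · exact Fin.sum_univ_two f
  · exact (Fin.sum_univ_two f).trans (add_comm _ _)

section Parity

variable {X Y : Type*} {P : Fin 2 → Fin 2 → X → Y → ℝ}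

/-- A normalized no-signaling box `P a b x y = P(a,b|x,y)` with binary outputs. Entries may be
negative (a quasi-probability box): positivity is kept as a separate condition. -/
structure IsNoSignaling (P : Fin 2 → Fin 2 → X → Y → ℝ) : Prop where
  sum_eq_one : ∀ x y, ∑ a, ∑ b, P a b x y = 1
  sum_right_eq : ∀ a x y y', ∑ b, P a b x y = ∑ b, P a b x y'
  sum_left_eq : ∀ b y x x', ∑ a, P a b x y = ∑ a, P a b x' y

/-- The probability that the outputs have parity `a ⊕ b = c` on inputs `x`, `y`, summed over the
output `a`, which forces `b = a ⊕ c`. -/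
def parityProb (P : Fin 2 → Fin 2 → X → Y → ℝ) (c : Fin 2) (x : X) (y : Y) : ℝ :=
  ∑ a, P a (a + c) x y

lemma parityProb_add (a b : Fin 2) (x : X) (y : Y) :
    parityProb P (a + b) x y = P a b x y + P (a + 1) (b + 1) x y := by
  have same : a + (a + b) = b := by decide +revert
  have flipped : a + 1 + (a + b) = b + 1 := by decide +revert
  rw [parityProb, sum_fin_two_eq_add_add_one _ a, same, flipped]

lemma parityProb_add_add_one (a b : Fin 2) (x : X) (y : Y) :
    parityProb P (a + b + 1) x y = P a (b + 1) x y + P (a + 1) b x y := by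
  have flip_twice : b + 1 + 1 = b := by decide +revert
  rw [add_assoc, parityProb_add, flip_twice]

lemma parityProb_nonneg (hpos : ∀ a b x y, 0 ≤ P a b x y) (c : Fin 2) (x : X) (y : Y) :
    0 ≤ parityProb P c x y :=
  Finset.sum_nonneg fun a _ => hpos a (a + c) x y

lemma apply_le_parityProb (hpos : ∀ a b x y, 0 ≤ P a b x y) (a b : Fin 2) (x : X) (y : Y) :
    P a b x y ≤ parityProb P (a + b) x y := by
  rw [parityProb_add]
  exact le_add_of_nonneg_right (hpos _ _ x y)

lemma two_mul_apply_eq_marginals_sub (a b : Fin 2) (x : X) (y : Y) :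
    2 * P a b x y =
      ∑ b', P a b' x y + ∑ a', P a' b x y - parityProb P (a + b + 1) x y := by
  rw [sum_fin_two_eq_add_add_one (P a · x y) b, sum_fin_two_eq_add_add_one (P · b x y) a,
    parityProb_add_add_one]
  ring

namespace IsNoSignaling

lemma parityProb_add_parityProb_add_one (hP : IsNoSignaling P) (c : Fin 2) (x : X) (y : Y) :
    parityProb P c x y + parityProb P (c + 1) x y = 1 := by
  rw [← hP.sum_eq_one x y, parityProb, parityProb, ← Finset.sum_add_distrib]
  refine Finset.sum_congr rfl fun a _ => ?_
  rw [sum_fin_two_eq_add_add_one _ (a + c), add_assoc]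

lemma apply_add_apply_flip_le_one (hP : IsNoSignaling P) (hpos : ∀ a b x y, 0 ≤ P a b x y)
    (a b : Fin 2) (x : X) (y : Y) : P a b x y + P (a + 1) (b + 1) x y ≤ 1 := by
  rw [← parityProb_add, ← hP.parityProb_add_parityProb_add_one (a + b) x y]
  exact le_add_of_nonneg_right (parityProb_nonneg hpos _ x y)

end IsNoSignaling

end Parity

section CHSH

variable {P : Fin 2 → Fin 2 → Fin 2 → Fin 2 → ℝ}

/-- The total probability of losing the CHSH game, i.e. of `a ⊕ b ≠ x·y`, summed (not averaged)
over the four inputs. -/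
def chshLoss (P : Fin 2 → Fin 2 → Fin 2 → Fin 2 → ℝ) : ℝ :=
  ∑ x, ∑ y, parityProb P (x * y + 1) x y

/-- The Hardy expression based at the entry `(a,b,x,y)`; the base `(0,0,0,0)` gives `B_H`. When
`a ⊕ b = x·y`, the three subtracted entries, one for each other pair of inputs, lose the CHSH
game. -/
def hardyValue (P : Fin 2 → Fin 2 → Fin 2 → Fin 2 → ℝ) (a b x y : Fin 2) : ℝ :=
  P a b x y - (P a (b + x + 1) x (y + 1) + P (a + y + 1) b (x + 1) y
    + P (a + y) (b + x) (x + 1) (y + 1))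

lemma hardyValue_le_apply (hpos : ∀ a b x y, 0 ≤ P a b x y) (a b x y : Fin 2) :
    hardyValue P a b x y ≤ P a b x y :=
  sub_le_self _ (add_nonneg (add_nonneg (hpos _ _ _ _) (hpos _ _ _ _)) (hpos _ _ _ _))

lemma chshLoss_eq (x y : Fin 2) :
    chshLoss P = parityProb P (x * y + 1) x y + parityProb P (x * (y + 1) + 1) x (y + 1)
      + (parityProb P ((x + 1) * y + 1) (x + 1) y
        + parityProb P ((x + 1) * (y + 1) + 1) (x + 1) (y + 1)) := by
  rw [chshLoss, sum_fin_two_eq_add_add_one _ x, sum_fin_two_eq_add_add_one _ y,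
    sum_fin_two_eq_add_add_one _ y]

lemma parityProb_le_chshLoss (hpos : ∀ a b x y, 0 ≤ P a b x y) (x y : Fin 2) :
    parityProb P (x * y + 1) x y ≤ chshLoss P := by
  rw [chshLoss_eq x y, add_assoc]
  exact le_add_of_nonneg_right (add_nonneg (parityProb_nonneg hpos _ _ _)
    (add_nonneg (parityProb_nonneg hpos _ _ _) (parityProb_nonneg hpos _ _ _)))

lemma apply_le_chshLoss (hpos : ∀ a b x y, 0 ≤ P a b x y) {a b x y : Fin 2}
    (hlose : a + b ≠ x * y) : P a b x y ≤ chshLoss P := by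
  have parity : ∀ c d : Fin 2, c ≠ d → c = d + 1 := by decide
  calc P a b x y ≤ parityProb P (a + b) x y := apply_le_parityProb hpos a b x y
    _ = parityProb P (x * y + 1) x y := by rw [parity _ _ hlose]
    _ ≤ chshLoss P := parityProb_le_chshLoss hpos x y

namespace IsNoSignaling

lemma two_mul_apply_of_add_eq_mul (hP : IsNoSignaling P) {a b x y : Fin 2}
    (hwin : a + b = x * y) (x₀ y₀ : Fin 2) :
    2 * P a b x y =
      ∑ b', P a b' x y₀ + ∑ a', P a' b x₀ y - parityProb P (x * y + 1) x y := by
  rw [two_mul_apply_eq_marginals_sub, hwin, hP.sum_right_eq a x y y₀, hP.sum_left_eq b y x x₀]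

lemma two_mul_apply_of_add_eq_mul_add_one (hP : IsNoSignaling P) {a b x y : Fin 2}
    (hlose : a + b = x * y + 1) (x₀ y₀ : Fin 2) :
    2 * P a b x y =
      ∑ b', P a b' x y₀ + ∑ a', P a' b x₀ y - 1 + parityProb P (x * y + 1) x y := by
  rw [two_mul_apply_eq_marginals_sub, hlose, hP.sum_right_eq a x y y₀, hP.sum_left_eq b y x x₀,
    ← hP.parityProb_add_parityProb_add_one (x * y + 1) x y]
  ring

theorem two_mul_hardyValue (hP : IsNoSignaling P) {a b x y : Fin 2} (hwin : a + b = x * y) :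
    2 * hardyValue P a b x y = 1 - chshLoss P := by
  have lose_right : a + (b + x + 1) = x * (y + 1) + 1 := by decide +revert
  have lose_left : a + y + 1 + b = (x + 1) * y + 1 := by decide +revert
  have lose_both : a + y + (b + x) = (x + 1) * (y + 1) + 1 := by decide +revert
  have base := hP.two_mul_apply_of_add_eq_mul hwin x y
  have right := hP.two_mul_apply_of_add_eq_mul_add_one lose_right x y
  have left := hP.two_mul_apply_of_add_eq_mul_add_one lose_left x y
  have both := hP.two_mul_apply_of_add_eq_mul_add_one lose_both x y
  have alice : ∑ b', P (a + y) b' (x + 1) y + ∑ b', P (a + y + 1) b' (x + 1) y = 1 := by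
    rw [← hP.sum_eq_one (x + 1) y,
      sum_fin_two_eq_add_add_one (fun a' => ∑ b', P a' b' (x + 1) y) (a + y)]
  have bob : ∑ a', P a' (b + x) x (y + 1) + ∑ a', P a' (b + x + 1) x (y + 1) = 1 := by
    rw [← hP.sum_eq_one x (y + 1), Finset.sum_comm,
      sum_fin_two_eq_add_add_one (fun b' => ∑ a', P a' b' x (y + 1)) (b + x)]
  rw [hardyValue, chshLoss_eq x y]
  linarith only [base, right, left, both, alice, bob]

theorem hardyValue_le_apply_of_add_eq_mul (hP : IsNoSignaling P)
    (hpos : ∀ a b x y, 0 ≤ P a b x y) {a b x y : Fin 2} (hwin : a + b = x * y) :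
    hardyValue P 0 0 0 0 ≤ P a b x y := by
  have base_change : hardyValue P 0 0 0 0 = hardyValue P a b x y := by
    have origin : 2 * hardyValue P 0 0 0 0 = 1 - chshLoss P := hP.two_mul_hardyValue rfl
    linarith only [origin, hP.two_mul_hardyValue hwin]
  exact base_change.trans_le (hardyValue_le_apply hpos a b x y)

theorem apply_le_one_sub_hardyValue (hP : IsNoSignaling P) (hpos : ∀ a b x y, 0 ≤ P a b x y)
    {a b x y : Fin 2} (hwin : a + b = x * y) : P a b x y ≤ 1 - hardyValue P 0 0 0 0 := by
  have hwin_flip : a + 1 + (b + 1) = x * y := by decide +revert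
  have lower := hP.hardyValue_le_apply_of_add_eq_mul hpos hwin_flip
  have upper := hP.apply_add_apply_flip_le_one hpos a b x y
  linarith only [lower, upper]

theorem apply_le_one_sub_two_mul_hardyValue (hP : IsNoSignaling P)
    (hpos : ∀ a b x y, 0 ≤ P a b x y) {a b x y : Fin 2} (hlose : a + b ≠ x * y) :
    P a b x y ≤ 1 - 2 * hardyValue P 0 0 0 0 := by
  rw [hP.two_mul_hardyValue rfl, sub_sub_cancel]
  exact apply_le_chshLoss hpos hlose

end IsNoSignaling

end CHSH

/-- For any no-signaling (2,2,2) box: every entry with `a ⊕ b = x·y` satisfies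
`B_H ≤ P(a,b|x,y) ≤ 1 − B_H`, and every entry with `a ⊕ b ≠ x·y` satisfies
`P(a,b|x,y) ≤ 1 − 2·B_H`. -/
theorem noSignaling_all_entries_bounds (P : Fin 2 → Fin 2 → Fin 2 → Fin 2 → ℝ)
    (hpos : ∀ a b x y, 0 ≤ P a b x y)
    (hnorm : ∀ x y, ∑ a, ∑ b, P a b x y = 1)
    (hnsA : ∀ a x y y', ∑ b, P a b x y = ∑ b, P a b x y')
    (hnsB : ∀ b y x x', ∑ a, P a b x y = ∑ a, P a b x' y) :
    (∀ a b x y : Fin 2, a + b = x * y →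
      (P 0 0 0 0 - (P 0 1 0 1 + P 1 0 1 0 + P 0 0 1 1)) ≤ P a b x y ∧
      P a b x y ≤ 1 - (P 0 0 0 0 - (P 0 1 0 1 + P 1 0 1 0 + P 0 0 1 1))) ∧
    (∀ a b x y : Fin 2, a + b ≠ x * y →
      P a b x y ≤ 1 - 2 * (P 0 0 0 0 - (P 0 1 0 1 + P 1 0 1 0 + P 0 0 1 1))) := by
  have hP : IsNoSignaling P := ⟨hnorm, hnsA, hnsB⟩
  exact ⟨fun _ _ _ _ hwin =>
      ⟨hP.hardyValue_le_apply_of_add_eq_mul hpos hwin, hP.apply_le_one_sub_hardyValue hpos hwin⟩,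
    fun _ _ _ _ hlose => hP.apply_le_one_sub_two_mul_hardyValue hpos hlose⟩
end

section
/- Consider a two-party Bell scenario with Alice input set of size 2, Bob input set of size n ≥ 2, and arbitrary finite output sets. Let (a_H, b_H, x_H, y_H) be a distinguished quadruple and let S_0 be a Hardy frame for it, i.e. a set of quadruples such that every local box vanishing on S_0 satisfies P(a_H,b_H|x_H,y_H) = 0. Then every no-signaling box P satisfies P(a_H,b_H|x_H,y_H) ≤ (n−1)/n + z_H/n, where z_H = Σ_{(a,b,x,y)∈S_0} P(a,b|x,y). Moreover the bound is tight: for every n ≥ 2 and every z ∈ [0,1] there exist such a scenario, a Hardy frame S_0, and a no-signaling box with Σ_{(a,b,x,y)∈S_0} P(a,b|x,y) = z and P(a_H,b_H|x_H,y_H) = (n−1)/n + z/n. -/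
/-- A two-party box: nonnegative entries, normalized for every input pair. -/
def IsBox {A B X Y : Type*} [Fintype A] [Fintype B]
    (P : A → B → X → Y → ℝ) : Prop :=
  (∀ a b x y, 0 ≤ P a b x y) ∧ ∀ x y, (∑ a, ∑ b, P a b x y) = 1

/-- The no-signaling conditions: each party's marginal is independent of the
other party's input. -/
def NoSignaling {A B X Y : Type*} [Fintype A] [Fintype B]
    (P : A → B → X → Y → ℝ) : Prop :=
  (∀ a x y y', (∑ b, P a b x y) = ∑ b, P a b x y') ∧
  (∀ b y x x', (∑ a, P a b x y) = ∑ a, P a b x' y)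

/-- A box is local (classical) if it is a finite convex combination of
deterministic boxes. -/
def IsLocal {A B X Y : Type*} [Fintype A] [Fintype B] [DecidableEq A] [DecidableEq B]
    (P : A → B → X → Y → ℝ) : Prop :=
  ∃ (Λ : Type) (s : Finset Λ) (q : Λ → ℝ) (f : Λ → X → A) (g : Λ → Y → B),
    (∀ l ∈ s, 0 ≤ q l) ∧ (∑ l ∈ s, q l = 1) ∧
    ∀ a b x y, P a b x y =
      ∑ l ∈ s, q l * (if a = f l x then 1 else 0) * (if b = g l y then 1 else 0)

/-- A box vanishes on a set of (output, output, input, input) quadruples. -/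
def VanishesOn {A B X Y : Type*} (P : A → B → X → Y → ℝ)
    (S0 : Finset (A × B × X × Y)) : Prop :=
  ∀ t ∈ S0, P t.1 t.2.1 t.2.2.1 t.2.2.2 = 0

/-!
Let `x'` be the other input of Alice. For each output `a`, any local strategy with `xH ↦ aH`,
`x' ↦ a` and `yH ↦ bH` meets the frame. If for every `y` Bob had an avoiding reply (`bH` at `yH`),
these replies would combine into an avoiding strategy; so some input `φ a` of Bob has none.
For fixed `y`, the events `φ a = y` under `x'` and `a = aH` under `xH` can be compared
through Bob's marginal, which does not see Alice's input: with `z y` the weight of the zeros at `y`,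
`P(φ a = y | x') ≤ 1 - P(aH, bH | xH, yH) + z y`.
Summing over `y` gives `1 ≤ n * (1 - P(aH, bH | xH, yH)) + z_H`.

For tightness, interpolate between boxes attaining the bound at `z = 0` and at `z = 1`, using the
same frame for both.
-/

section DeterministicBox

variable {A B X Y : Type*} [DecidableEq A] [DecidableEq B]

/-- The deterministic box in which Alice answers `f x` and Bob answers `g y`. -/
def deterministicBox (f : X → A) (g : Y → B) (a : A) (b : B) (x : X) (y : Y) : ℝ :=
  (if a = f x then 1 else 0) * (if b = g y then 1 else 0)

lemma deterministicBox_eq_zero_iff {f : X → A} {g : Y → B} {a : A} {b : B} {x : X} {y : Y} :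
    deterministicBox f g a b x y = 0 ↔ ¬(a = f x ∧ b = g y) := by
  simpa [deterministicBox] using imp_not_comm

lemma deterministicBox_apply_self (f : X → A) (g : Y → B) (x : X) (y : Y) :
    deterministicBox f g (f x) (g y) x y = 1 := by
  simp [deterministicBox]

variable [Fintype A] [Fintype B]

lemma isLocal_deterministicBox (f : X → A) (g : Y → B) : IsLocal (deterministicBox f g) :=
  ⟨Unit, {()}, fun _ => 1, fun _ => f, fun _ => g, by simp, by simp,
    fun a b x y => by simp [deterministicBox]⟩

lemma IsLocal.exists_strategy_of_ne_zero {Q : A → B → X → Y → ℝ} (hQ : IsLocal Q)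
    {a : A} {b : B} {x : X} {y : Y} (h : Q a b x y ≠ 0) :
    ∃ (f : X → A) (g : Y → B), f x = a ∧ g y = b ∧ ∀ x' y', Q (f x') (g y') x' y' ≠ 0 := by
  obtain ⟨Λ, s, q, f, g, hq, -, hQ⟩ := hQ
  rw [hQ] at h
  obtain ⟨l, hl, hterm⟩ := Finset.exists_ne_zero_of_sum_ne_zero h
  have hql : 0 < q l := (hq l hl).lt_of_ne' (left_ne_zero_of_mul (left_ne_zero_of_mul hterm))
  refine ⟨f l, g l, by_contra fun hf => hterm ?_, by_contra fun hg => hterm ?_, fun x' y' => ?_⟩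
  · simp [Ne.symm hf]
  · simp [Ne.symm hg]
  · rw [hQ]
    refine (Finset.sum_pos' (fun k hk => ?_) ⟨l, hl, by simpa using hql⟩).ne'
    have := hq k hk
    positivity

lemma isBox_deterministicBox (f : X → A) (g : Y → B) : IsBox (deterministicBox f g) :=
  ⟨fun a b x y => by unfold deterministicBox; positivity,
    fun x y => by simp [deterministicBox]⟩

lemma noSignaling_deterministicBox (f : X → A) (g : Y → B) :
    NoSignaling (deterministicBox f g) :=
  ⟨fun a x y y' => by simp [deterministicBox], fun b y x x' => by simp [deterministicBox]⟩

end DeterministicBox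

section HardyFrame

variable {A B X Y : Type*} [Fintype A] [Fintype B] [DecidableEq A] [DecidableEq B]

/-- `S` is a Hardy frame for `(aH, bH, xH, yH)`: every local box vanishing on `S` also vanishes at
this quadruple. -/
def IsHardyFrame (S : Finset (A × B × X × Y)) (aH : A) (bH : B) (xH : X) (yH : Y) : Prop :=
  ∀ Q : A → B → X → Y → ℝ, IsBox Q → IsLocal Q → VanishesOn Q S → Q aH bH xH yH = 0

variable {S : Finset (A × B × X × Y)} {aH : A} {bH : B} {xH : X} {yH : Y}

theorem isHardyFrame_iff :
    IsHardyFrame S aH bH xH yH ↔ ∀ (f : X → A) (g : Y → B), f xH = aH → g yH = bH →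
      ∃ x y, (f x, g y, x, y) ∈ S := by
  constructor
  · rintro hS f g rfl rfl
    by_contra! havoid
    have hvanish : VanishesOn (deterministicBox f g) S := by
      rintro ⟨a, b, x, y⟩ ht
      refine deterministicBox_eq_zero_iff.mpr ?_
      rintro ⟨rfl : a = f x, rfl : b = g y⟩
      exact havoid x y ht
    have hzero := hS _ (isBox_deterministicBox f g) (isLocal_deterministicBox f g) hvanish
    exact one_ne_zero ((deterministicBox_apply_self f g xH yH).symm.trans hzero)
  · intro hS Q _ hlocal hvanish
    by_contra hne
    obtain ⟨f, g, hf, hg, hQ⟩ := hlocal.exists_strategy_of_ne_zero hne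
    obtain ⟨x, y, hxy⟩ := hS f g hf hg
    exact hQ x y (hvanish _ hxy)

lemma IsHardyFrame.exists_blocking_input (hS : IsHardyFrame S aH bH xH yH) {x' : X}
    (hne : x' ≠ xH) (hx' : ∀ x, x ≠ xH → x = x') (a : A) :
    ∃ y, ∀ b, (y = yH → b = bH) → (aH, b, xH, y) ∈ S ∨ (a, b, x', y) ∈ S := by
  classical
  by_contra! hreply
  choose g hbH hxH hx'S using hreply
  obtain ⟨x, y, hxy⟩ := isHardyFrame_iff.mp hS (fun x => if x = xH then aH else a) g
    (if_pos rfl) (hbH yH rfl)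
  by_cases hx : x = xH
  · subst hx
    exact hxH y (by simpa using hxy)
  · obtain rfl := hx' x hx
    exact hx'S y (by simpa [hne] using hxy)

end HardyFrame

section ZeroWeight

variable {A B X Y : Type*} [DecidableEq X] [DecidableEq Y]

/-- The total probability that `P` assigns to the elements of `S` with inputs `x` and `y`. -/
def zeroWeight (P : A → B → X → Y → ℝ) (S : Finset (A × B × X × Y)) (x : X) (y : Y) : ℝ :=
  ∑ t ∈ S with t.2.2 = (x, y), P t.1 t.2.1 t.2.2.1 t.2.2.2

variable {P : A → B → X → Y → ℝ} {S : Finset (A × B × X × Y)}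

lemma sum_zeroWeight [Fintype X] [Fintype Y] :
    ∑ y, ∑ x, zeroWeight P S x y = ∑ t ∈ S, P t.1 t.2.1 t.2.2.1 t.2.2.2 := by
  rw [← Finset.sum_fiberwise S (fun t => t.2.2), Fintype.sum_prod_type, Finset.sum_comm]
  rfl

lemma sum_le_zeroWeight (hP : ∀ a b x y, 0 ≤ P a b x y) {x : X} {y : Y} {E : Finset A}
    {F : Finset B} (hS : ∀ a ∈ E, ∀ b ∈ F, (a, b, x, y) ∈ S) :
    ∑ a ∈ E, ∑ b ∈ F, P a b x y ≤ zeroWeight P S x y := by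
  let quadruple : A × B ↪ A × B × X × Y := ⟨fun p => (p.1, p.2, x, y), by
    rintro ⟨a, b⟩ ⟨a', b'⟩ h
    simpa using h⟩
  calc ∑ a ∈ E, ∑ b ∈ F, P a b x y
      = ∑ t ∈ (E ×ˢ F).map quadruple, P t.1 t.2.1 t.2.2.1 t.2.2.2 := by
        rw [Finset.sum_map, Finset.sum_product]
        rfl
    _ ≤ zeroWeight P S x y := by
        refine Finset.sum_le_sum_of_subset_of_nonneg ?_ fun t _ _ => hP _ _ _ _
        rintro t ht
        obtain ⟨⟨a, b⟩, hab, rfl⟩ := Finset.mem_map.mp ht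
        obtain ⟨ha, hb⟩ := Finset.mem_product.mp hab
        exact Finset.mem_filter.mpr ⟨hS a ha b hb, rfl⟩

end ZeroWeight

section UpperBound

variable {A B X Y : Type*} [Fintype A] [Fintype B] {P : A → B → X → Y → ℝ}

lemma IsBox.sum_add_sum_le_one_add (hP : IsBox P) (hN : NoSignaling P) (a : A) (x x' : X) (y : Y)
    (E : Finset A) (G : Finset B) :
    ∑ a' ∈ E, ∑ b, P a' b x' y + ∑ b ∈ G, P a b x y ≤
      1 + ∑ a' ∈ E, ∑ b ∈ G, P a' b x' y := by
  classical
  have hsplit : ∑ a' ∈ E, ∑ b, P a' b x' y =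
      ∑ a' ∈ E, ∑ b ∈ G, P a' b x' y + ∑ a' ∈ E, ∑ b ∈ Gᶜ, P a' b x' y := by
    simp only [← Finset.sum_add_distrib, Finset.sum_add_sum_compl]
  have hcompl : ∑ a' ∈ E, ∑ b ∈ Gᶜ, P a' b x' y ≤ ∑ b ∈ Gᶜ, ∑ a', P a' b x y := by
    rw [Finset.sum_comm]
    refine Finset.sum_le_sum fun b _ => ?_
    rw [hN.2 b y x x']
    exact Finset.sum_le_univ_sum_of_nonneg fun a' => hP.1 a' b x' y
  have hG : ∑ b ∈ G, P a b x y ≤ ∑ b ∈ G, ∑ a', P a' b x y :=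
    Finset.sum_le_sum fun b _ =>
      Finset.single_le_sum (fun a' _ => hP.1 a' b x y) (Finset.mem_univ a)
  have hone : ∑ b ∈ G, ∑ a', P a' b x y + ∑ b ∈ Gᶜ, ∑ a', P a' b x y = 1 := by
    rw [Finset.sum_add_sum_compl, Finset.sum_comm, hP.2 x y]
  linarith

lemma IsBox.apply_le_sum_filter [DecidableEq B] [DecidableEq Y] (hP : IsBox P)
    (hN : NoSignaling P) (a : A) (b₀ : B) (x : X) (y₀ y : Y) :
    P a b₀ x y₀ ≤ ∑ b with (y = y₀ → b = b₀), P a b x y := by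
  by_cases hy : y = y₀
  · subst hy
    exact Finset.single_le_sum (fun b _ => hP.1 a b x y) (by simp)
  · simp only [hy, false_imp_iff, Finset.filter_true]
    rw [hN.1 a x y y₀]
    exact Finset.single_le_sum (fun b _ => hP.1 a b x y₀) (Finset.mem_univ b₀)

variable [DecidableEq X] [DecidableEq Y] {S : Finset (A × B × X × Y)}

lemma IsBox.sum_blocked_le (hP : IsBox P) (hN : NoSignaling P) (aH : A) (bH : B) (xH : X)
    (yH : Y) {x' : X} {y : Y} {E : Finset A}
    (hE : ∀ a ∈ E, ∀ b, (y = yH → b = bH) → (aH, b, xH, y) ∈ S ∨ (a, b, x', y) ∈ S) :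
    ∑ a ∈ E, ∑ b, P a b x' y ≤
      1 - P aH bH xH yH + (zeroWeight P S xH y + zeroWeight P S x' y) := by
  classical
  let R : Finset B := {b | y = yH → b = bH}
  let G : Finset B := {b ∈ R | (aH, b, xH, y) ∉ S}
  have hunion := hP.sum_add_sum_le_one_add hN aH xH x' y E G
  have hzero' : ∑ a ∈ E, ∑ b ∈ G, P a b x' y ≤ zeroWeight P S x' y := by
    refine sum_le_zeroWeight hP.1 fun a ha b hb => ?_
    obtain ⟨hbR, hbS⟩ := Finset.mem_filter.mp hb
    exact (hE a ha b (Finset.mem_filter.mp hbR).2).resolve_left hbS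
  have hzero : ∑ b ∈ R with (aH, b, xH, y) ∈ S, P aH b xH y ≤ zeroWeight P S xH y := by
    simpa using sum_le_zeroWeight hP.1 (P := P) (S := S) (x := xH) (y := y) (E := {aH})
      (F := {b ∈ R | (aH, b, xH, y) ∈ S}) (by simp)
  have hR : ∑ b ∈ R with (aH, b, xH, y) ∈ S, P aH b xH y + ∑ b ∈ G, P aH b xH y =
      ∑ b ∈ R, P aH b xH y := Finset.sum_filter_add_sum_filter_not _ _ _
  linarith [hP.apply_le_sum_filter hN aH bH xH yH y]

end UpperBound

theorem IsHardyFrame.apply_le_of_card_eq_two {A B X Y : Type*} [Fintype A] [Fintype B] [Fintype X]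
    [Fintype Y] [DecidableEq A] [DecidableEq B] {S : Finset (A × B × X × Y)} {aH : A} {bH : B}
    {xH : X} {yH : Y} (hS : IsHardyFrame S aH bH xH yH) (hX : Fintype.card X = 2)
    {P : A → B → X → Y → ℝ} (hP : IsBox P) (hN : NoSignaling P) :
    P aH bH xH yH ≤ ((Fintype.card Y : ℝ) - 1) / Fintype.card Y +
      (∑ t ∈ S, P t.1 t.2.1 t.2.2.1 t.2.2.2) / Fintype.card Y := by
  classical
  obtain ⟨x', hne, hx'⟩ := (Nat.card_eq_two_iff' xH).mp (Nat.card_eq_fintype_card.trans hX)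
  choose φ hφ using hS.exists_blocking_input hne hx'
  have hX_univ : (Finset.univ : Finset X) = {xH, x'} := by
    ext x
    simpa [or_iff_not_imp_left] using hx' x
  have htotal : ∑ y, ∑ a with φ a = y, ∑ b, P a b x' y = 1 := by
    rw [← hP.2 x' yH, ← Finset.sum_fiberwise Finset.univ φ]
    exact Finset.sum_congr rfl fun y _ => Finset.sum_congr rfl fun a _ => hN.1 a x' y yH
  have hsum : 1 ≤ Fintype.card Y * (1 - P aH bH xH yH) +
      ∑ t ∈ S, P t.1 t.2.1 t.2.2.1 t.2.2.2 :=
    calc 1 = ∑ y, ∑ a with φ a = y, ∑ b, P a b x' y := htotal.symm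
      _ ≤ ∑ y, (1 - P aH bH xH yH + (zeroWeight P S xH y + zeroWeight P S x' y)) := by
        refine Finset.sum_le_sum fun y _ => hP.sum_blocked_le hN aH bH xH yH fun a ha => ?_
        obtain rfl := (Finset.mem_filter.mp ha).2
        exact hφ a
      _ = _ := by
        simp only [← sum_zeroWeight (P := P), hX_univ, Finset.sum_pair hne.symm,
          Finset.sum_add_distrib (f := fun _ => 1 - P aH bH xH yH), Finset.sum_const,
          Finset.card_univ, nsmul_eq_mul]
  have hcard : (0 : ℝ) < Fintype.card Y := Nat.cast_pos.mpr (Fintype.card_pos_iff.mpr ⟨yH⟩)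
  rw [← add_div, le_div_iff₀ hcard]
  linarith

section Convexity

variable {A B X Y : Type*} [Fintype A] [Fintype B]

lemma convex_setOf_isBox : Convex ℝ {P : A → B → X → Y → ℝ | IsBox P} := by
  intro P hP Q hQ s t hs ht hst
  refine ⟨fun a b x y => ?_, fun x y => ?_⟩
  · exact add_nonneg (mul_nonneg hs (hP.1 a b x y)) (mul_nonneg ht (hQ.1 a b x y))
  · simp only [Pi.add_apply, Pi.smul_apply, smul_eq_mul, Finset.sum_add_distrib,
      ← Finset.mul_sum, hP.2 x y, hQ.2 x y, mul_one, hst]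

lemma convex_setOf_noSignaling : Convex ℝ {P : A → B → X → Y → ℝ | NoSignaling P} := by
  intro P hP Q hQ s t _ _ _
  refine ⟨fun a x y y' => ?_, fun b y x x' => ?_⟩ <;>
    simp only [Pi.add_apply, Pi.smul_apply, smul_eq_mul, Finset.sum_add_distrib,
      ← Finset.mul_sum]
  · rw [hP.1 a x y y', hQ.1 a x y y']
  · rw [hP.2 b y x x', hQ.2 b y x x']

end Convexity

section Tightness

variable {ι : Type*} [Fintype ι] [DecidableEq ι]

/-- The Hardy frame of the tight example: the outputs `(o, e)` are excluded for Alice's input `0`,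
and `(y, b)` with `b ≠ e` for the inputs `(1, y)`. -/
def tightFrame (o e : ι) : Finset (ι × ι × Fin 2 × ι) :=
  {t | t.1 = o ∧ t.2.1 = e ∧ t.2.2.1 = 0 ∨ t.1 = t.2.2.2 ∧ t.2.1 ≠ e ∧ t.2.2.1 = 1}

lemma mem_tightFrame {o e a b y : ι} {x : Fin 2} :
    (a, b, x, y) ∈ tightFrame o e ↔ a = o ∧ b = e ∧ x = 0 ∨ a = y ∧ b ≠ e ∧ x = 1 := by
  simp [tightFrame]

lemma isHardyFrame_tightFrame (o e bH yH : ι) : IsHardyFrame (tightFrame o e) o bH 0 yH := by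
  refine isHardyFrame_iff.mpr fun f g hf _ => ?_
  by_cases hg : g (f 1) = e
  · exact ⟨0, f 1, mem_tightFrame.mpr (.inl ⟨hf, hg, rfl⟩)⟩
  · exact ⟨1, f 1, mem_tightFrame.mpr (.inr ⟨rfl, hg, rfl⟩)⟩

lemma sum_tightFrame_deterministicBox {o e : ι} (hoe : o ≠ e) :
    ∑ t ∈ tightFrame o e,
      deterministicBox (fun _ => o) (fun _ => o) t.1 t.2.1 t.2.2.1 t.2.2.2 = 1 := by
  rw [Finset.sum_eq_single_of_mem (o, o, 1, o) (by simp [mem_tightFrame, hoe]),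
    deterministicBox_apply_self]
  rintro ⟨a, b, x, y⟩ ht hne
  rw [deterministicBox_eq_zero_iff]
  rintro ⟨rfl : a = o, rfl : b = a⟩
  obtain ⟨-, hbe, -⟩ | ⟨rfl, -, rfl⟩ := mem_tightFrame.mp ht
  · exact hoe hbe
  · exact hne rfl

/-- Bob's reply to `y` in the tight example when the shared random variable is `c`. -/
def tightReply (o e c y : ι) : ι := if c = y then e else o

/-- The box attaining the bound with weight `0` on `tightFrame o e`. It is simulated by a uniform
shared `c : ι` when Alice learns Bob's input: Bob outputs `tightReply o e c y`, and Alice copies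
Bob's output on input `0` and outputs `c` on input `1`. -/
noncomputable def tightBox (o e a b : ι) (x : Fin 2) (y : ι) : ℝ :=
  (∑ c, if b = tightReply o e c y ∧ a = (if x = 0 then b else c) then 1 else 0) / Fintype.card ι

lemma sum_tightReply_eq (o e : ι) (u : ι → ℝ) (y y' : ι) :
    ∑ c, u (tightReply o e c y) = ∑ c, u (tightReply o e c y') := by
  rw [← Equiv.sum_comp (Equiv.swap y y')]
  refine Finset.sum_congr rfl fun c _ => ?_
  simp only [tightReply, Equiv.swap_apply_eq_iff, Equiv.swap_apply_left]

lemma sum_fst_tightBox (o e b : ι) (x : Fin 2) (y : ι) :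
    ∑ a, tightBox o e a b x y =
      (∑ c, if b = tightReply o e c y then 1 else 0) / Fintype.card ι := by
  simp only [tightBox, ← Finset.sum_div]
  rw [Finset.sum_comm]
  simp [ite_and]

lemma sum_snd_tightBox (o e a : ι) (x : Fin 2) (y : ι) :
    ∑ b, tightBox o e a b x y =
      (∑ c, if a = (if x = 0 then tightReply o e c y else c) then 1 else 0) / Fintype.card ι := by
  simp only [tightBox, ← Finset.sum_div]
  rw [Finset.sum_comm]
  simp [ite_and]

lemma isBox_tightBox [Nonempty ι] (o e : ι) : IsBox (tightBox o e) := by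
  refine ⟨fun a b x y => by unfold tightBox; positivity, fun x y => ?_⟩
  rw [Finset.sum_comm]
  simp only [sum_fst_tightBox, ← Finset.sum_div]
  rw [Finset.sum_comm]
  simp

lemma noSignaling_tightBox (o e : ι) : NoSignaling (tightBox o e) := by
  refine ⟨fun a x y y' => ?_, fun b y x x' => ?_⟩
  · simp only [sum_snd_tightBox]
    by_cases hx : x = 0
    · simp only [hx, if_true]
      rw [sum_tightReply_eq o e (fun b => if a = b then 1 else 0) y y']
    · simp only [hx, if_false]
  · simp only [sum_fst_tightBox]

lemma vanishesOn_tightBox {o e : ι} (hoe : o ≠ e) :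
    VanishesOn (tightBox o e) (tightFrame o e) := by
  rintro ⟨a, b, x, y⟩ ht
  have hevent (c : ι) : ¬(b = tightReply o e c y ∧ a = (if x = 0 then b else c)) := by
    rintro ⟨hb, ha⟩
    obtain ⟨rfl, rfl, rfl⟩ | ⟨rfl, hbe, rfl⟩ := mem_tightFrame.mp ht
    · exact hoe (by simpa using ha)
    · obtain rfl : a = c := by simpa using ha
      exact hbe (by simpa [tightReply] using hb)
  simp [tightBox, hevent]

lemma tightBox_apply_zero {o e : ι} (hoe : o ≠ e) (y : ι) :
    tightBox o e o o 0 y = ((Fintype.card ι : ℝ) - 1) / Fintype.card ι := by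
  have hreply (c : ι) : o = tightReply o e c y ↔ c ≠ y := by
    simp [tightReply, hoe]
  have hcard : 1 ≤ Fintype.card ι := Fintype.card_pos_iff.mpr ⟨o⟩
  simp only [tightBox, if_true, and_true, hreply, Finset.sum_boole, Finset.filter_ne',
    Finset.card_erase_of_mem (Finset.mem_univ y), Finset.card_univ, Nat.cast_sub hcard,
    Nat.cast_one]

theorem exists_noSignaling_tightFrame {o e : ι} (hoe : o ≠ e) {z : ℝ} (hz : z ∈ Set.Icc 0 1) :
    ∃ P : ι → ι → Fin 2 → ι → ℝ, IsBox P ∧ NoSignaling P ∧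
      ∑ t ∈ tightFrame o e, P t.1 t.2.1 t.2.2.1 t.2.2.2 = z ∧
      P o o 0 o = ((Fintype.card ι : ℝ) - 1) / Fintype.card ι + z / Fintype.card ι := by
  have : Nonempty ι := ⟨o⟩
  let D : ι → ι → Fin 2 → ι → ℝ := deterministicBox (fun _ => o) (fun _ => o)
  have hz' : 0 ≤ 1 - z := sub_nonneg.mpr hz.2
  have hweights : z + (1 - z) = 1 := add_sub_cancel z 1
  refine ⟨z • D + (1 - z) • tightBox o e,
    convex_setOf_isBox (isBox_deterministicBox _ _) (isBox_tightBox o e) hz.1 hz' hweights,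
    convex_setOf_noSignaling (noSignaling_deterministicBox _ _) (noSignaling_tightBox o e)
      hz.1 hz' hweights, ?_, ?_⟩
  · simp only [Pi.add_apply, Pi.smul_apply, smul_eq_mul, Finset.sum_add_distrib,
      ← Finset.mul_sum, D, sum_tightFrame_deterministicBox hoe,
      Finset.sum_eq_zero (vanishesOn_tightBox hoe)]
    ring
  · have hD : D o o 0 o = 1 := deterministicBox_apply_self _ _ _ _
    have hcard : (Fintype.card ι : ℝ) ≠ 0 := Nat.cast_ne_zero.mpr Fintype.card_ne_zero
    simp only [Pi.add_apply, Pi.smul_apply, smul_eq_mul, hD, tightBox_apply_zero hoe]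
    field_simp
    ring

end Tightness

/-- Noisy version: any no-signaling box satisfies
`P(a_H,b_H|x_H,y_H) ≤ (n−1)/n + z_H/n` where `z_H` is the total weight on the
Hardy-frame zeros, and this bound is tight for every `z ∈ [0,1]`. -/
theorem hardy_2xn_noisy_bound :
    (∀ (A B Y : Type) (_ : Fintype A) (_ : Fintype B) (_ : Fintype Y)
      (_ : DecidableEq A) (_ : DecidableEq B) (n : ℕ), 2 ≤ n →
      Fintype.card Y = n →
      ∀ (aH : A) (bH : B) (xH : Fin 2) (yH : Y)
        (S0 : Finset (A × B × Fin 2 × Y)),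
        (∀ Q : A → B → Fin 2 → Y → ℝ,
          IsBox Q → IsLocal Q → VanishesOn Q S0 → Q aH bH xH yH = 0) →
        ∀ P : A → B → Fin 2 → Y → ℝ,
          IsBox P → NoSignaling P →
          P aH bH xH yH ≤ ((n : ℝ) - 1) / n +
            (∑ t ∈ S0, P t.1 t.2.1 t.2.2.1 t.2.2.2) / n) ∧
    (∀ n : ℕ, 2 ≤ n → ∀ z : ℝ, 0 ≤ z → z ≤ 1 →
      ∃ (aH bH : Fin n) (xH : Fin 2) (yH : Fin n)
        (S0 : Finset (Fin n × Fin n × Fin 2 × Fin n)),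
        (∀ Q : Fin n → Fin n → Fin 2 → Fin n → ℝ,
          IsBox Q → IsLocal Q → VanishesOn Q S0 → Q aH bH xH yH = 0) ∧
        ∃ P : Fin n → Fin n → Fin 2 → Fin n → ℝ,
          IsBox P ∧ NoSignaling P ∧
          (∑ t ∈ S0, P t.1 t.2.1 t.2.2.1 t.2.2.2) = z ∧
          P aH bH xH yH = ((n : ℝ) - 1) / n + z / n) := by
  constructor
  · rintro A B Y _ _ _ _ _ n - rfl aH bH xH yH S0 hS P hP hN
    exact IsHardyFrame.apply_le_of_card_eq_two hS (Fintype.card_fin 2) hP hN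
  · intro n hn z hz0 hz1
    have := Fin.nontrivial_iff_two_le.mpr hn
    obtain ⟨o, e, hoe⟩ := exists_pair_ne (Fin n)
    obtain ⟨P, hbox, hns, hzero, hH⟩ := exists_noSignaling_tightFrame hoe ⟨hz0, hz1⟩
    rw [Fintype.card_fin] at hH
    exact ⟨o, o, 0, o, tightFrame o e, isHardyFrame_tightFrame o e o o, P, hbox, hns, hzero, hH⟩
end
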